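/- arXiv:2012.04816 — 4 statements merged into one kernel-verified Lean document; each statement's English description precedes it below -/
import Mathlib

section
/- Let G be a finite simple graph with connectivity κ(G) = k, let S be a minimum separating set of G (so |S| = k), and let F be an end of G to S with |V(F)| ≥ 2. Then the graph G[S] − V(F̄) is (k+1)-connected, where F̄ = G − (S ∪ V(F)) is the complementary fragment of F. -/
/-- A graph `G` is `k`-connected if it has at least `k+1` vertices and
deleting any set of fewer than `k` vertices leaves a connected graph. -/
def KConnected {V : Type*} (G : SimpleGraph V) (k : ℕ) : Prop :=
  k + 1 ≤ Nat.card V ∧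
    ∀ X : Finset V, X.card < k → (G.induce ((X : Set V)ᶜ)).Connected

/-- `G[S]`: the graph obtained from `G` by adding all edges between pairs of
vertices of `S`. -/
def addClique {V : Type*} (G : SimpleGraph V) (S : Set V) : SimpleGraph V :=
  G ⊔ SimpleGraph.fromRel fun a b => a ∈ S ∧ b ∈ S

/-- `F` is a fragment of `G` to `S`: a nonempty union of connected components
of `G - S` (i.e. a nonempty subset of `Sᶜ` with no edge to the rest of
`G - S`) such that `G - S - F` is nonempty. -/
def IsFragment {V : Type*} (G : SimpleGraph V) (S F : Set V) : Prop :=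
  F.Nonempty ∧ F ⊆ Sᶜ ∧ (Sᶜ \ F).Nonempty ∧
    ∀ u ∈ F, ∀ v ∈ Sᶜ \ F, ¬ G.Adj u v

/-!
Suppose deleting a set `X` of at most `k` vertices disconnects `G[S] - F̄`. Since `S` is a clique
there, one of the two sides, say `A`, lies in `F`. Vertices of `F` have no neighbours in `F̄`, so
`A` is also a fragment of `G` to `X`, whence `|X| = k`. As `F` is an end, `A = F`, so `X ⊆ S` and
then `X = S` by cardinality. But this leaves no vertex for the other side.
-/

section

variable {V : Type*} {G H : SimpleGraph V} {S F X A : Set V} {k : ℕ}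

/-- `k`-connectedness of a possibly infinite graph. It agrees with `KConnected` on finite vertex
types; on infinite ones `KConnected` is always false because there `Nat.card V = 0`. -/
def IsVertexConnected (G : SimpleGraph V) (k : ℕ) : Prop :=
  (k : ℕ∞) + 1 ≤ ENat.card V ∧ ∀ X : Set V, X.encard < k → (G.induce Xᶜ).Connected

/-- `F` is an end of `G` to `S`: a fragment to `S` that properly contains no fragment to a set of
the same size as `S`. In a `k`-connected graph with `S.encard = k`, the fragments compared with `F`
are those to minimum separating sets, as in the paper. -/
def IsEnd (G : SimpleGraph V) (S F : Set V) : Prop :=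
  IsFragment G S F ∧
    ∀ S' F' : Set V, S'.encard = S.encard → IsFragment G S' F' → F' ⊆ F → F' = F

theorem kConnected_iff_isVertexConnected [Finite V] : KConnected G k ↔ IsVertexConnected G k := by
  refine and_congr ?_ ⟨fun h X hX => ?_, fun h X hX => h X ?_⟩
  · rw [ENat.card_eq_coe_natCard]
    norm_cast
  · lift X to Finset V using X.toFinite
    exact h X (by simpa using hX)
  · simpa using hX

namespace IsFragment

theorem disjoint (h : IsFragment G S F) : Disjoint S F :=
  Set.subset_compl_iff_disjoint_left.1 h.2.1

theorem compl (h : IsFragment G S F) : IsFragment G S (Sᶜ \ F) := by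
  obtain ⟨nonempty, subset, compl_nonempty, not_adj⟩ := h
  have double_compl : Sᶜ \ (Sᶜ \ F) = F := Set.sdiff_sdiff_cancel_left subset
  refine ⟨compl_nonempty, Set.sdiff_subset, double_compl.symm ▸ nonempty, fun u hu v hv huv => ?_⟩
  exact not_adj v (double_compl ▸ hv) u hu huv.symm

theorem anti (hGH : G ≤ H) (h : IsFragment H S F) : IsFragment G S F :=
  ⟨h.1, h.2.1, h.2.2.1, fun u hu v hv huv => h.2.2.2 u hu v hv (hGH huv)⟩

theorem not_connected (h : IsFragment G S F) : ¬ (G.induce Sᶜ).Connected := by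
  obtain ⟨⟨u, hu⟩, subset, ⟨v, hvS, hvF⟩, not_adj⟩ := h
  intro connected
  obtain ⟨p⟩ := connected.preconnected ⟨u, subset hu⟩ ⟨v, hvS⟩
  obtain ⟨d, -, fst_mem, snd_notMem⟩ := p.exists_boundary_dart (Subtype.val ⁻¹' F) hu hvF
  exact not_adj d.fst fst_mem d.snd ⟨d.snd.2, snd_notMem⟩ d.adj

end IsFragment

theorem exists_isFragment_of_not_connected (hX : Xᶜ.Nonempty)
    (h : ¬ (G.induce Xᶜ).Connected) : ∃ A, IsFragment G X A := by
  have : Nonempty ↥Xᶜ := hX.to_subtype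
  obtain ⟨u, v, huv⟩ : ∃ u v, ¬ (G.induce Xᶜ).Reachable u v := by
    by_contra! preconnected
    exact h ⟨preconnected⟩
  let component : Set ↥Xᶜ := {w | (G.induce Xᶜ).Reachable u w}
  refine ⟨Subtype.val '' component, ⟨u, u, .refl u, rfl⟩, Subtype.coe_image_subset _ _,
    ⟨v, v.2, ?_⟩, ?_⟩
  · rwa [Subtype.val_injective.mem_set_image]
  · rintro _ ⟨a, ha, rfl⟩ b ⟨hbX, hb⟩ hab
    have hab' : (G.induce Xᶜ).Adj a ⟨b, hbX⟩ := hab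
    exact hb ⟨⟨b, hbX⟩, ha.trans hab'.reachable, rfl⟩

theorem IsVertexConnected.le_encard_of_isFragment (hG : IsVertexConnected G k)
    (hA : IsFragment G X A) : (k : ℕ∞) ≤ X.encard :=
  not_lt.1 fun hX => hA.not_connected (hG.2 X hX)

namespace IsFragment

theorem image_val_of_subset (hF : IsFragment G S F) {X A : Set ↥(S ∪ F)}
    (hA : IsFragment (G.induce (S ∪ F)) X A) (hAF : Subtype.val '' A ⊆ F) :
    IsFragment G (Subtype.val '' X) (Subtype.val '' A) := by
  obtain ⟨-, -, ⟨z, hzS, hzF⟩, not_adj_compl⟩ := hF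
  obtain ⟨nonempty, subset, -, not_adj⟩ := hA
  have hz : z ∉ S ∪ F := fun h => h.elim hzS hzF
  refine ⟨nonempty.image _, ?_, ⟨z, ?_, fun h => hzF (hAF h)⟩, ?_⟩
  · exact (Set.image_mono subset).trans (Set.image_compl_subset Subtype.val_injective)
  · exact fun h => hz (Subtype.coe_image_subset _ _ h)
  · rintro _ ⟨a, ha, rfl⟩ v ⟨hvX, hvA⟩ hav
    by_cases hv : v ∈ S ∪ F
    · exact not_adj a ha ⟨v, hv⟩ ⟨fun h => hvX ⟨_, h, rfl⟩, fun h => hvA ⟨_, h, rfl⟩⟩ hav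
    · rw [Set.mem_union, not_or] at hv
      exact not_adj_compl a (hAF ⟨a, ha, rfl⟩) v hv hav

theorem disjoint_or_compl_disjoint_of_isClique {K : Set V} (hK : G.IsClique K)
    (hA : IsFragment G X A) : Disjoint A K ∨ Disjoint (Xᶜ \ A) K := by
  by_contra! h
  obtain ⟨a, ha, haK⟩ := Set.not_disjoint_iff.1 h.1
  obtain ⟨b, hb, hbK⟩ := Set.not_disjoint_iff.1 h.2
  exact hA.2.2.2 a ha b hb (hK haK hbK fun hab => hb.2 (hab ▸ ha))

end IsFragment

theorem isClique_addClique (G : SimpleGraph V) (S : Set V) : (addClique G S).IsClique S :=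
  fun _ ha _ hb hab => Or.inr ⟨hab, Or.inl ⟨ha, hb⟩⟩

theorem IsFragment.exists_isFragment_image_val_subset {X A : Set ↥(S ∪ F)}
    (hA : IsFragment ((addClique G S).induce (S ∪ F)) X A) :
    ∃ B, IsFragment ((addClique G S).induce (S ∪ F)) X B ∧ Subtype.val '' B ⊆ F := by
  have clique : ((addClique G S).induce (S ∪ F)).IsClique (Subtype.val ⁻¹' S) :=
    fun a ha b hb hab => isClique_addClique G S ha hb (Subtype.coe_ne_coe.2 hab)
  have image_subset {B : Set ↥(S ∪ F)} (hB : Disjoint B (Subtype.val ⁻¹' S)) :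
      Subtype.val '' B ⊆ F := by
    rintro _ ⟨b, hb, rfl⟩
    exact b.2.resolve_left (Set.disjoint_left.1 hB hb)
  obtain h | h := hA.disjoint_or_compl_disjoint_of_isClique clique
  · exact ⟨A, hA, image_subset h⟩
  · exact ⟨_, hA.compl, image_subset h⟩

theorem IsEnd.lt_encard_of_isFragment_addClique (hG : IsVertexConnected G k) (hS : S.encard = k)
    (hF : IsEnd G S F) {X A : Set ↥(S ∪ F)}
    (hA : IsFragment ((addClique G S).induce (S ∪ F)) X A) : (k : ℕ∞) < X.encard := by
  by_contra! hX
  obtain ⟨B, hB, hBF⟩ := hA.exists_isFragment_image_val_subset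
  have hB' : IsFragment G (Subtype.val '' X) (Subtype.val '' B) :=
    hF.1.image_val_of_subset (hB.anti fun _ _ => Or.inl) hBF
  have card_eq : (Subtype.val '' X).encard = S.encard := by
    rw [hS]
    exact le_antisymm ((Set.encard_image_le _ _).trans hX) (hG.le_encard_of_isFragment hB')
  have image_B : Subtype.val '' B = F := hF.2 _ _ card_eq hB' hBF
  have X_subset : Subtype.val '' X ⊆ S := by
    rintro _ ⟨x, hx, rfl⟩
    exact x.2.resolve_right fun hxF =>
      Set.disjoint_left.1 hB'.disjoint ⟨x, hx, rfl⟩ (image_B.symm ▸ hxF)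
  have image_X : Subtype.val '' X = S :=
    (Set.finite_of_encard_eq_coe (card_eq.trans hS)).eq_of_subset_of_encard_le X_subset card_eq.ge
  obtain ⟨w, hwX, hwB⟩ := hB.2.2.1
  obtain hw | hw := w.2
  · exact hwX (Subtype.val_injective.mem_set_image.1 (image_X.symm ▸ hw))
  · exact hwB (Subtype.val_injective.mem_set_image.1 (image_B.symm ▸ hw))

theorem stmt_2_general (hG : IsVertexConnected G k) (hS : S.encard = k) (hF : IsEnd G S F)
    (hF2 : F.Nontrivial) :
    IsVertexConnected ((addClique G S).induce (S ∪ F)) (k + 1) := by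
  have card_ge : ((k + 1 : ℕ) : ℕ∞) + 1 ≤ ENat.card ↥(S ∪ F) := by
    rw [ENat.card_coe_set_eq, Set.encard_union_eq hF.1.disjoint, hS, Nat.cast_add, add_assoc]
    gcongr
    exact Order.add_one_le_of_lt (Set.one_lt_encard_iff_nontrivial.2 hF2)
  refine ⟨card_ge, fun X hX => ?_⟩
  have compl_nonempty : Xᶜ.Nonempty := by
    rw [Set.nonempty_compl]
    rintro rfl
    rw [Set.encard_univ] at hX
    exact (hX.trans_le (le_self_add.trans card_ge)).false
  by_contra not_connected
  obtain ⟨A, hA⟩ := exists_isFragment_of_not_connected compl_nonempty not_connected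
  have hkX : (k : ℕ∞) < X.encard := hF.lt_encard_of_isFragment_addClique hG hS hA
  exact hX.not_ge (by exact_mod_cast Order.add_one_le_of_lt hkX)

end

/-- If `κ(G) = k`, `S` is a minimum separating set of `G` and `F` is an end
of `G` to `S` with `|F| ≥ 2`, then `G[S] - V(F̄)` (the graph induced on
`S ∪ F` after completing `S`) is `(k+1)`-connected. -/
theorem stmt_2 {V : Type*} [Fintype V] (G : SimpleGraph V) (k : ℕ)
    (hκ₁ : KConnected G k) (hκ₂ : ¬ KConnected G (k + 1))
    (S F : Set V) (hsep : ¬ (G.induce (Sᶜ)).Connected) (hS : S.ncard = k)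
    (hF : IsFragment G S F)
    (hend : ∀ S' F' : Set V, S'.ncard = k → ¬ (G.induce (S'ᶜ)).Connected →
      IsFragment G S' F' → F' ⊆ F → F' = F)
    (hF2 : 2 ≤ F.ncard) :
    KConnected ((addClique G S).induce (S ∪ F)) (k + 1) := by
  have hS' : S.encard = k := by rw [← S.toFinite.cast_ncard_eq, hS]
  have isEnd : IsEnd G S F := by
    refine ⟨hF, fun S' F' hcard hF' => hend S' F' ?_ hF'.not_connected hF'⟩
    rw [Set.ncard, hcard, ← Set.ncard, hS]
  exact kConnected_iff_isVertexConnected.2 <|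
    stmt_2_general (kConnected_iff_isVertexConnected.1 hκ₁) hS' isEnd
      (Set.one_lt_ncard_iff_nontrivial.1 hF2)
end

section
/- Let G be a k-connected finite simple graph and let S be a separating set of G with |S| = k. Then for every fragment F of G to S, the graph G[S] − V(F) is k-connected. -/
/-!
Delete a set `X` with `|X| < k ≤ |S|`, and collapse the fragment `F` to some `s ∈ S \ X`. The
neighbours of `F` outside `F` all lie in `S`, so the collapse sends each edge of `G - X` to a single
vertex, to an edge of `G`, or to two vertices of the clique on `S`. Hence the connectedness of
`G - X` passes to `G[S] - F - X`.
-/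

section

open SimpleGraph

variable {V W : Type*} {G : SimpleGraph V} {S F : Set V} {k : ℕ}

theorem preconnected_of_surjective_of_adj_reachable {H : SimpleGraph W} (hG : G.Preconnected)
    {f : V → W} (hf : f.Surjective) (hadj : ∀ u v, G.Adj u v → H.Reachable (f u) (f v)) :
    H.Preconnected := by
  refine hf.forall₂.mpr fun u v ↦ ?_
  simp only [reachable_iff_reflTransGen] at hadj ⊢
  exact Relation.ReflTransGen.lift' f hadj _ _ ((reachable_iff_reflTransGen u v).mp (hG u v))

theorem addClique_adj {u v : V} :
    (addClique G S).Adj u v ↔ G.Adj u v ∨ u ≠ v ∧ u ∈ S ∧ v ∈ S := by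
  simp only [addClique, sup_adj, fromRel_adj]
  tauto

theorem induce_addClique_reachable {A : Set V} {u v : A} (hu : u.1 ∈ S) (hv : v.1 ∈ S) :
    ((addClique G S).induce A).Reachable u v := by
  obtain rfl | huv := eq_or_ne u v
  · rfl
  · exact Adj.reachable (addClique_adj.mpr (Or.inr ⟨Subtype.coe_ne_coe.mpr huv, hu, hv⟩))

namespace IsFragment

theorem subset_compl (hF : IsFragment G S F) : S ⊆ Fᶜ :=
  Set.subset_compl_comm.mp hF.2.1

theorem mem_of_adj (hF : IsFragment G S F) {u v : V} (hu : u ∈ F) (hv : v ∉ F)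
    (huv : G.Adj u v) : v ∈ S := by
  by_contra hvS
  exact hF.2.2.2 u hu v ⟨hvS, hv⟩ huv

theorem ncard_lt_ncard_compl [Finite V] (hF : IsFragment G S F) : S.ncard < Fᶜ.ncard := by
  obtain ⟨w, hwS, hwF⟩ := hF.2.2.1
  exact Set.ncard_lt_ncard (Set.ssubset_iff_exists.mpr ⟨hF.subset_compl, w, hwF, hwS⟩)

theorem connected_induce_addClique_sdiff (hF : IsFragment G S F) {A : Set V}
    (hA : (G.induce A).Connected) (hSA : (S ∩ A).Nonempty) :
    ((addClique G S).induce (A \ F)).Connected := by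
  classical
  obtain ⟨s, hsS, hsA⟩ := hSA
  let center : ↥(A \ F) := ⟨s, hsA, hF.subset_compl hsS⟩
  let collapse : A → ↥(A \ F) := fun v ↦ if hv : v.1 ∈ F then center else ⟨v, v.2, hv⟩
  have collapse_of_mem {v : A} (hv : v.1 ∈ F) : collapse v = center := dif_pos hv
  have collapse_of_notMem {v : A} (hv : v.1 ∉ F) : collapse v = ⟨v, v.2, hv⟩ := dif_neg hv
  have collapse_surjective : collapse.Surjective := fun v ↦
    ⟨⟨v, v.2.1⟩, collapse_of_notMem v.2.2⟩
  have : Nonempty ↥(A \ F) := ⟨center⟩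
  refine ⟨preconnected_of_surjective_of_adj_reachable hA.preconnected collapse_surjective
    fun u v huv ↦ ?_⟩
  by_cases hu : u.1 ∈ F <;> by_cases hv : v.1 ∈ F
  · rw [collapse_of_mem hu, collapse_of_mem hv]
  · rw [collapse_of_mem hu, collapse_of_notMem hv]
    exact induce_addClique_reachable hsS (hF.mem_of_adj hu hv huv)
  · rw [collapse_of_notMem hu, collapse_of_mem hv]
    exact induce_addClique_reachable (hF.mem_of_adj hv hu huv.symm) hsS
  · rw [collapse_of_notMem hu, collapse_of_notMem hv]
    exact Adj.reachable (addClique_adj.mpr (Or.inl huv))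

end IsFragment

namespace KConnected

theorem finite (hG : KConnected G k) : Finite V :=
  Nat.finite_of_card_ne_zero (Nat.ne_zero_of_lt hG.1)

theorem of_connected_induce_sdiff {A : Set V} (hcard : k < A.ncard)
    (hconn : ∀ X : Finset V, X.card < k → (G.induce (A \ X)).Connected) :
    KConnected (G.induce A) k := by
  refine ⟨hcard, fun X hX ↦ ?_⟩
  let toInduce : G.induce (A \ (X.map (.subtype (· ∈ A)) : Finset V)) →g
      (G.induce A).induce (X : Set A)ᶜ :=
    { toFun v := ⟨⟨v, v.2.1⟩, fun hv ↦ v.2.2 (Finset.mem_map_of_mem _ hv)⟩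
      map_rel' huv := huv }
  exact (hconn _ (by rwa [Finset.card_map])).map toInduce fun v ↦
    ⟨⟨v, v.1.2, fun hv ↦ v.2 ((Finset.mem_map' (.subtype (· ∈ A))).mp hv)⟩, rfl⟩

end KConnected

theorem stmt_3_general (hG : KConnected G k) (hS : k ≤ S.ncard) (hF : IsFragment G S F) :
    KConnected ((addClique G S).induce Fᶜ) k := by
  have := hG.finite
  refine .of_connected_induce_sdiff (hS.trans_lt hF.ncard_lt_ncard_compl) fun X hX ↦ ?_
  have hSX : (S ∩ (X : Set V)ᶜ).Nonempty :=
    Set.sdiff_nonempty_of_ncard_lt_ncard (by rw [Set.ncard_coe_finset]; exact hX.trans_le hS)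
  have hsdiff : Fᶜ \ (X : Set V) = (X : Set V)ᶜ \ F := by grind
  rw [hsdiff]
  exact hF.connected_induce_addClique_sdiff (hG.2 X hX) hSX

end

/-- If `G` is `k`-connected, `S` is a separating set with `|S| = k`, and `F`
is a fragment of `G` to `S`, then `G[S] - V(F)` is `k`-connected. -/
theorem stmt_3 {V : Type*} [Fintype V] (G : SimpleGraph V) (k : ℕ)
    (hG : KConnected G k)
    (S F : Set V) (hsep : ¬ (G.induce (Sᶜ)).Connected) (hS : S.ncard = k)
    (hF : IsFragment G S F) :
    KConnected ((addClique G S).induce (Fᶜ)) k :=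
  stmt_3_general hG hS.ge hF
end

section
/- Let k, m be positive integers and let (G,C) ∈ F_k(m), i.e., G is a k-connected finite simple graph with |V(G)| ≥ k+1 and C ⊆ G is a complete subgraph with |V(C)| = k such that every vertex of G outside C has degree at least ⌊3k/2⌋ + m − 1 in G. Let S be a separating set of G with |S| = k and let F be a fragment of G to S with C ⊆ G(V(F) ∪ S). If W is a subgraph of G − (S ∪ V(F)) of order at most m and the graph G[S] − V(F ∪ W) is k-connected, then G − V(W) is k-connected. -/
/-!
Suppose `X` with `|X| < k` separates `G - W` into parts `A` and `B`. The clique `C` misses one of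
them, say `B`. Let `R` be what remains of `G` outside `F ∪ S ∪ W`, so that `S` separates `F` from
`R` in `G - W`. The two separations cross, and each nonempty quadrant `A ∩ F`, `A ∩ R`, `B ∩ F`,
`B ∩ R` is cut off by a corner set consisting of `S ∩ X`, a part of `S` and a part of `X`. Corners
next to `F` have at least `k` vertices because `G` is `k`-connected, those next to `R` because
`G[S] - V(F ∪ W)` is; when `A ∩ F` is empty, `C` lies in the corner at `A ∩ F`.

Opposite corners have `|S| + |X| < 2k` vertices together, so they cannot both be large. This empties
`B ∩ R`, and it empties `B ∩ F` or `A ∩ R`. If `B ∩ F = ∅` then `B ⊆ S`, and if `A ∩ R = ∅` then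
`R ⊆ X`; the neighbours of a vertex of `B`, respectively of `R`, are then so few that the degree
condition forces `|S ∩ B| > k / 2`, respectively `|X ∩ R| ≥ k / 2`, and `X` is again too large.
-/

open Set

section Separation

variable {V : Type*} {G : SimpleGraph V} {k : ℕ} {U U' A B X F S R : Set V}

/-- `X` separates `A` from `B` in the subgraph of `G` induced by `U`: the three sets partition `U`
and no edge joins `A` to `B`. The sides `A` and `B` may be empty. -/
structure IsSeparation (G : SimpleGraph V) (U A X B : Set V) : Prop where
  union_eq : A ∪ X ∪ B = U
  disjoint_left_separator : Disjoint A X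
  disjoint_separator_right : Disjoint X B
  disjoint_sides : Disjoint A B
  not_adj : ∀ u ∈ A, ∀ v ∈ B, ¬ G.Adj u v

/-- The corner at the quadrant `A ∩ F` of two crossing separations with sides `A`, `F` and
separators `X`, `S`: the vertices that cut this quadrant off from the rest. -/
def corner (A X F S : Set V) : Set V :=
  S ∩ A ∪ S ∩ X ∪ X ∩ F

namespace IsSeparation

theorem symm (h : IsSeparation G U A X B) : IsSeparation G U B X A where
  union_eq := by rw [← h.union_eq, union_assoc, union_comm, union_comm X A]
  disjoint_left_separator := h.disjoint_separator_right.symm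
  disjoint_separator_right := h.disjoint_left_separator.symm
  disjoint_sides := h.disjoint_sides.symm
  not_adj u hu v hv huv := h.not_adj v hv u hu huv.symm

theorem disjoint_union_right (h : IsSeparation G U A X B) : Disjoint (A ∪ X) B :=
  h.disjoint_sides.union_left h.disjoint_separator_right

theorem separator_subset (h : IsSeparation G U A X B) : X ⊆ U :=
  h.union_eq ▸ subset_union_right.trans subset_union_left

theorem left_union_subset (h : IsSeparation G U A X B) : A ∪ X ⊆ U :=
  h.union_eq ▸ subset_union_left

theorem left_subset (h : IsSeparation G U A X B) : A ⊆ U :=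
  subset_union_left.trans h.left_union_subset

theorem sdiff_left_eq (h : IsSeparation G U A X B) : U \ A = B ∪ X := by
  rw [← h.symm.union_eq, union_sdiff_cancel_right h.symm.disjoint_union_right.le_bot]

theorem mem_or (h : IsSeparation G U A X B) {v : V} (hv : v ∈ U) : v ∈ A ∨ v ∈ X ∨ v ∈ B := by
  rwa [← h.union_eq, union_assoc] at hv

theorem subset_separator_of_disjoint (h : IsSeparation G U A X B) {T : Set V} (hTU : T ⊆ U)
    (hTA : Disjoint T A) (hTB : Disjoint T B) : T ⊆ X := fun v hv ↦ by
  rcases h.mem_or (hTU hv) with hvA | hvX | hvB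
  · exact absurd hvA (disjoint_left.1 hTA hv)
  · exact hvX
  · exact absurd hvB (disjoint_left.1 hTB hv)

theorem mem_union_of_adj (h : IsSeparation G U A X B) {u v : V} (hu : u ∈ A) (hv : v ∈ U)
    (huv : G.Adj u v) : v ∈ A ∪ X := by
  rcases h.mem_or hv with hvA | hvX | hvB
  · exact .inl hvA
  · exact .inr hvX
  · exact absurd huv (h.not_adj u hu v hvB)

theorem of_neighbors_subset (hAX : Disjoint A X) (hU : A ∪ X ⊆ U)
    (hadj : ∀ u ∈ A, ∀ v ∈ U, G.Adj u v → v ∈ A ∪ X) :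
    IsSeparation G U A X (U \ (A ∪ X)) where
  union_eq := union_sdiff_cancel hU
  disjoint_left_separator := hAX
  disjoint_separator_right := disjoint_sdiff_right.mono_left subset_union_right
  disjoint_sides := disjoint_sdiff_right.mono_left subset_union_left
  not_adj u hu v hv huv := hv.2 (hadj u hu v hv.1 huv)

theorem union_of_disjoint (hAX : Disjoint A X) : IsSeparation G (A ∪ X) A X ∅ where
  union_eq := union_empty _
  disjoint_left_separator := hAX
  disjoint_separator_right := disjoint_empty _
  disjoint_sides := disjoint_empty _
  not_adj _ _ _ hv := hv.elim

theorem sdiff_right (h : IsSeparation G U A X B) {W : Set V} (hW : W ⊆ B) :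
    IsSeparation G (U \ W) A X (B \ W) where
  union_eq := by
    rw [← h.union_eq, union_sdiff_distrib, sdiff_eq_left.2 (Disjoint.mono_right hW
      h.disjoint_union_right)]
  disjoint_left_separator := h.disjoint_left_separator
  disjoint_separator_right := h.disjoint_separator_right.mono_right sdiff_subset
  disjoint_sides := h.disjoint_sides.mono_right sdiff_subset
  not_adj u hu v hv := h.not_adj u hu v hv.1

theorem preimage_val (h : IsSeparation G U A X B) :
    IsSeparation (G.induce U) univ (Subtype.val ⁻¹' A) (Subtype.val ⁻¹' X)
      (Subtype.val ⁻¹' B) where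
  union_eq := by
    rw [← preimage_union, ← preimage_union, h.union_eq, Subtype.coe_preimage_self]
  disjoint_left_separator := h.disjoint_left_separator.preimage _
  disjoint_separator_right := h.disjoint_separator_right.preimage _
  disjoint_sides := h.disjoint_sides.preimage _
  not_adj u hu v hv := h.not_adj u hu v hv

theorem image_val {A X B : Set U} (h : IsSeparation (G.induce U) univ A X B) :
    IsSeparation G U (Subtype.val '' A) (Subtype.val '' X) (Subtype.val '' B) where
  union_eq := by
    rw [← image_union, ← image_union, h.union_eq, image_univ, Subtype.range_coe]
  disjoint_left_separator :=
    disjoint_image_of_injective Subtype.val_injective h.disjoint_left_separator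
  disjoint_separator_right :=
    disjoint_image_of_injective Subtype.val_injective h.disjoint_separator_right
  disjoint_sides := disjoint_image_of_injective Subtype.val_injective h.disjoint_sides
  not_adj := by
    rintro _ ⟨u, hu, rfl⟩ _ ⟨v, hv, rfl⟩
    exact h.not_adj u hu v hv

theorem to_addClique (h : IsSeparation G U A X B) (hAS : Disjoint A S) :
    IsSeparation (addClique G S) U A X B where
  __ := h
  not_adj u hu v hv huv := by
    have huS : u ∉ S := disjoint_left.1 hAS hu
    rw [addClique, SimpleGraph.sup_adj, SimpleGraph.fromRel_adj] at huv
    exact h.not_adj u hu v hv (by tauto)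

theorem disjoint_or_disjoint_of_isClique (h : IsSeparation G U A X B) {C : Set V}
    (hC : G.IsClique C) : Disjoint C A ∨ Disjoint C B := by
  by_contra! hmeet
  obtain ⟨a, haC, haA⟩ := not_disjoint_iff.1 hmeet.1
  obtain ⟨b, hbC, hbB⟩ := not_disjoint_iff.1 hmeet.2
  exact h.not_adj a haA b hbB (hC haC hbC (h.disjoint_sides.ne_of_mem haA hbB))

theorem degree_lt [Fintype V] [DecidableRel G.Adj] {W : Set V} (h : IsSeparation G Wᶜ A X B)
    {v : V} (hv : v ∈ A) : G.degree v < A.ncard + X.ncard + W.ncard := by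
  have hnbr : G.neighborSet v ⊆ A ∪ X ∪ W := fun u huv ↦ by
    by_cases huW : u ∈ W
    · exact .inr huW
    · exact .inl (h.mem_union_of_adj hv huW huv)
  calc G.degree v = (G.neighborSet v).ncard := by
        rw [← G.card_neighborSet_eq_degree, ← Nat.card_eq_fintype_card, Nat.card_coe_set_eq]
    _ < (A ∪ X ∪ W).ncard :=
        ncard_lt_ncard (hnbr.ssubset_of_mem_notMem (.inl (.inl hv)) (G.notMem_neighborSet_self))
    _ ≤ A.ncard + X.ncard + W.ncard :=
        (ncard_union_le _ _).trans (Nat.add_le_add_right (ncard_union_le _ _) _)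

theorem le_ncard_add_ncard_of_le_degree [Fintype V] [DecidableRel G.Adj] {W : Set V} {d m : ℕ}
    (h : IsSeparation G Wᶜ A X B) (hdeg : ∀ v ∈ A, d + m - 1 ≤ G.degree v) (hWm : W.ncard ≤ m)
    (hA : A.Nonempty) : d ≤ A.ncard + X.ncard := by
  obtain ⟨v, hv⟩ := hA
  have hle := hdeg v hv
  have hlt := h.degree_lt hv
  omega

theorem ncard_inter_add [Finite V] (h : IsSeparation G U A X B) {T : Set V} (hT : T ⊆ U) :
    (T ∩ A).ncard + (T ∩ X).ncard + (T ∩ B).ncard = T.ncard := by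
  have hAX : Disjoint (T ∩ A) (T ∩ X) :=
    h.disjoint_left_separator.mono inter_subset_right inter_subset_right
  have hB : Disjoint (T ∩ (A ∪ X)) (T ∩ B) :=
    h.disjoint_union_right.mono inter_subset_right inter_subset_right
  rw [← ncard_union_eq hAX, ← inter_union_distrib_left, ← ncard_union_eq hB,
    ← inter_union_distrib_left, h.union_eq, inter_eq_left.2 hT]

end IsSeparation

theorem IsFragment.isSeparation (hF : IsFragment G S F) : IsSeparation G univ F S (Sᶜ \ F) := by
  have h : IsSeparation G univ F S (univ \ (F ∪ S)) :=
    .of_neighbors_subset (disjoint_left.2 hF.2.1) (subset_univ _) fun u hu v _ huv ↦ by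
      by_contra hv
      rw [mem_union, not_or] at hv
      exact hF.2.2.2 u hu v ⟨hv.2, hv.1⟩ huv
  rwa [← compl_eq_univ_sdiff, union_comm, compl_union, ← sdiff_eq] at h

theorem KConnected.finite_s5 (hG : KConnected G k) : Finite V :=
  Nat.finite_of_card_ne_zero (Nat.ne_zero_of_lt hG.1)

theorem KConnected.le_ncard_of_isSeparation (hG : KConnected G k) (h : IsSeparation G univ A X B)
    (hA : A.Nonempty) (hB : B.Nonempty) : k ≤ X.ncard := by
  by_contra! hX
  have := hG.finite_s5
  have hconn := hG.2 X.toFinite.toFinset (by rwa [← ncard_eq_toFinset_card X])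
  rw [Finite.coe_toFinset] at hconn
  obtain ⟨a, ha⟩ := hA
  obtain ⟨b, hb⟩ := hB
  obtain ⟨walk⟩ := hconn.preconnected ⟨a, disjoint_left.1 h.disjoint_left_separator ha⟩
    ⟨b, disjoint_right.1 h.disjoint_separator_right hb⟩
  obtain ⟨d, -, hfst, hsnd⟩ := walk.exists_boundary_dart (Subtype.val ⁻¹' A) ha
    (disjoint_right.1 h.disjoint_sides hb)
  rcases h.mem_union_of_adj hfst (mem_univ _) d.adj with hdA | hdX
  · exact hsnd hdA
  · exact d.snd.2 hdX

theorem exists_isSeparation_of_not_preconnected (h : ¬ (G.induce Xᶜ).Preconnected) :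
    ∃ A B, IsSeparation G univ A X B ∧ A.Nonempty ∧ B.Nonempty := by
  simp only [SimpleGraph.Preconnected, not_forall] at h
  obtain ⟨x, y, hxy⟩ := h
  let A : Set V := Subtype.val '' {z | (G.induce Xᶜ).Reachable x z}
  have hAX : Disjoint A X := disjoint_left.2 <| by
    rintro _ ⟨z, -, rfl⟩
    exact z.2
  refine ⟨A, univ \ (A ∪ X), .of_neighbors_subset hAX (subset_univ _) ?_,
    ⟨x, x, .refl x, rfl⟩, y, mem_univ _, ?_⟩
  · rintro _ ⟨u, hu, rfl⟩ v - huv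
    by_cases hvX : v ∈ X
    · exact .inr hvX
    · have huv' : (G.induce Xᶜ).Adj u ⟨v, hvX⟩ := huv
      exact .inl ⟨⟨v, hvX⟩, hu.trans huv'.reachable, rfl⟩
  · rintro (⟨z, hz, hzy⟩ | hyX)
    · exact hxy (Subtype.ext hzy ▸ hz)
    · exact y.2 hyX

theorem kConnected_of_forall_isSeparation (hcard : k + 1 ≤ Nat.card V)
    (hsep : ∀ A X B, IsSeparation G univ A X B → A.Nonempty → B.Nonempty → k ≤ X.ncard) :
    KConnected G k := by
  refine ⟨hcard, fun X hX ↦ ?_⟩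
  have hne : (X : Set V)ᶜ.Nonempty := by
    rw [nonempty_compl]
    intro huniv
    rw [← ncard_univ, ← huniv, ncard_coe_finset] at hcard
    omega
  have := hne.to_subtype
  refine ⟨by_contra fun hpre ↦ ?_⟩
  obtain ⟨A, B, h, hA, hB⟩ := exists_isSeparation_of_not_preconnected hpre
  have := hsep A X B h hA hB
  rw [ncard_coe_finset] at this
  omega

theorem KConnected.le_ncard_of_isSeparation_induce (hG : KConnected (G.induce U) k)
    (h : IsSeparation G U A X B) (hA : A.Nonempty) (hB : B.Nonempty) : k ≤ X.ncard := by
  have preimage_nonempty {T : Set V} (hT : T.Nonempty) (hTU : T ⊆ U) :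
      (Subtype.val ⁻¹' T : Set U).Nonempty :=
    hT.elim fun v hv ↦ ⟨⟨v, hTU hv⟩, hv⟩
  calc k ≤ (Subtype.val ⁻¹' X : Set U).ncard :=
        hG.le_ncard_of_isSeparation h.preimage_val
          (preimage_nonempty hA h.left_subset)
          (preimage_nonempty hB h.symm.left_subset)
    _ = X.ncard := ncard_preimage_of_injective_subset_range Subtype.val_injective
        (by rw [Subtype.range_coe]; exact h.separator_subset)

theorem kConnected_induce_of_forall_isSeparation (hcard : k + 1 ≤ U.ncard)
    (hsep : ∀ A X B, IsSeparation G U A X B → A.Nonempty → B.Nonempty → k ≤ X.ncard) :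
    KConnected (G.induce U) k := by
  refine kConnected_of_forall_isSeparation hcard fun A X B h hA hB ↦ ?_
  rw [← ncard_image_of_injective X Subtype.val_injective]
  exact hsep _ _ _ h.image_val (hA.image _) (hB.image _)

theorem inter_union_corner : A ∩ F ∪ corner A X F S = (A ∪ X) ∩ (F ∪ S) := by
  ext v
  simp only [corner, mem_union, mem_inter_iff]
  tauto

theorem ncard_corner_le : (corner A X F S).ncard ≤ (S ∩ A).ncard + (S ∩ X).ncard + (X ∩ F).ncard :=
  (ncard_union_le _ _).trans (Nat.add_le_add_right (ncard_union_le _ _) _)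

namespace IsSeparation

theorem inter_corner {Q : Set V} (h : IsSeparation G U A X B) (h' : IsSeparation G U' F S Q)
    (hU : F ∪ S ⊆ U) :
    IsSeparation G U' (A ∩ F) (corner A X F S) (U' \ ((A ∪ X) ∩ (F ∪ S))) := by
  have hdisj : Disjoint (A ∩ F) (corner A X F S) := by
    have hAX := disjoint_left.1 h.disjoint_left_separator
    have hFS := disjoint_left.1 h'.disjoint_left_separator
    refine disjoint_left.2 fun v hv ↦ ?_
    simp only [corner, mem_union, mem_inter_iff]
    have := hAX hv.1
    have := hFS hv.2
    tauto
  rw [← inter_union_corner]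
  refine of_neighbors_subset hdisj ?_ fun u hu v hv huv ↦ ?_
  · rw [inter_union_corner]
    exact inter_subset_right.trans h'.left_union_subset
  · have hvFS : v ∈ F ∪ S := h'.mem_union_of_adj hu.2 hv huv
    rw [inter_union_corner]
    exact ⟨h.mem_union_of_adj hu.1 (hU hvFS) huv, hvFS⟩

theorem ncard_inter_le_of_ncard_le_corner [Finite V] (h : IsSeparation G U A X B) (hS : S ⊆ U)
    (hcorner : S.ncard ≤ (corner A X F S).ncard) : (S ∩ B).ncard ≤ (X ∩ F).ncard := by
  have := hcorner.trans ncard_corner_le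
  have := h.ncard_inter_add hS
  omega

theorem ncard_le_of_opposite_corners [Finite V] (h : IsSeparation G U A X B)
    (h' : IsSeparation G U F S R) (hAF : S.ncard ≤ (corner A X F S).ncard)
    (hBR : S.ncard ≤ (corner B X R S).ncard) : S.ncard ≤ X.ncard := by
  have := h.ncard_inter_le_of_ncard_le_corner h'.separator_subset hAF
  have := h.symm.ncard_inter_le_of_ncard_le_corner h'.separator_subset hBR
  have := h.ncard_inter_add h'.separator_subset
  have := h'.ncard_inter_add h.separator_subset
  rw [inter_comm X S] at this
  omega

theorem ncard_le_of_corners [Finite V] (h : IsSeparation G U A X B)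
    (h' : IsSeparation G U F S R) (hAF : S.ncard ≤ (corner A X F S).ncard)
    (hBF : S.ncard ≤ (corner B X F S).ncard ∨ S.ncard / 2 < (S ∩ B).ncard)
    (hAR : S.ncard ≤ (corner A X R S).ncard ∨ S.ncard / 2 ≤ (X ∩ R).ncard) :
    S.ncard ≤ X.ncard := by
  have hBF' : (S ∩ B).ncard ≤ (X ∩ F).ncard :=
    h.ncard_inter_le_of_ncard_le_corner h'.separator_subset hAF
  have hS := h.ncard_inter_add h'.separator_subset
  have hX := h'.ncard_inter_add h.separator_subset
  rw [inter_comm X S] at hX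
  rcases hBF with hBF | hSB
  · rcases hAR with hAR | hXR
    · exact h.symm.ncard_le_of_opposite_corners h' hBF hAR
    · have := h.symm.ncard_inter_le_of_ncard_le_corner h'.separator_subset hBF
      omega
  · have hXR : S.ncard / 2 ≤ (X ∩ R).ncard := hAR.elim
      (fun hAR ↦ hSB.le.trans (h.ncard_inter_le_of_ncard_le_corner h'.separator_subset hAR)) id
    omega

end IsSeparation

theorem KConnected.le_ncard_corner {Q : Set V} (hG : KConnected G k)
    (hFS : IsSeparation G univ F S Q) (h : IsSeparation G U A X B) (hU : F ∪ S ⊆ U)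
    (hAF : (A ∩ F).Nonempty) (hB : B.Nonempty) : k ≤ (corner A X F S).ncard := by
  refine hG.le_ncard_of_isSeparation (h.inter_corner hFS hU) hAF (hB.mono fun v hv ↦ ?_)
  exact ⟨mem_univ v, fun hvAX ↦
    disjoint_right.1 h.disjoint_union_right hv hvAX.1⟩

theorem KConnected.not_subset_of_isSeparation {Q : Set V} (hG : KConnected G k)
    (hFS : IsSeparation G univ F S Q) (h : IsSeparation G U A X B) (hU : F ∪ S ⊆ U)
    (hA : A.Nonempty) (hB : B.Nonempty) (hX : X.ncard < k) : ¬ A ⊆ F := by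
  intro hAF
  have := hG.finite_s5
  have hcorner : corner A X F S ⊆ X :=
    union_subset (union_subset (fun v hv ↦
      absurd hv.1 (disjoint_left.1 hFS.disjoint_left_separator (hAF hv.2))) inter_subset_right)
      inter_subset_left
  have hk := hG.le_ncard_corner hFS h hU (by rwa [inter_eq_left.2 hAF]) hB
  exact (hk.trans (ncard_le_ncard hcorner)).not_gt hX

theorem KConnected.inter_union_nonempty {Q : Set V} (hG : KConnected G k)
    (hFS : IsSeparation G univ F S Q) (h' : IsSeparation G U F S R) (h : IsSeparation G U A X B)
    (hA : A.Nonempty) (hB : B.Nonempty) (hX : X.ncard < k) : (A ∩ (R ∪ S)).Nonempty := by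
  obtain ⟨v, hvA, hvF⟩ :=
    not_subset.1 (hG.not_subset_of_isSeparation hFS h h'.left_union_subset hA hB hX)
  exact ⟨v, hvA, h'.sdiff_left_eq ▸ ⟨h.left_subset hvA, hvF⟩⟩

theorem KConnected.le_ncard_corner_of_addClique
    (hH : KConnected ((addClique G S).induce (R ∪ S)) k) (hRS : Disjoint R S)
    (h : IsSeparation G U A X B) (hU : R ∪ S ⊆ U) (hAR : (A ∩ R).Nonempty)
    (hB : (B ∩ (R ∪ S)).Nonempty) : k ≤ (corner A X R S).ncard := by
  have hsep := (h.inter_corner (.union_of_disjoint hRS) hU).to_addClique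
    (hRS.mono_left inter_subset_right)
  refine hH.le_ncard_of_isSeparation_induce hsep hAR (hB.mono fun v hv ↦ ?_)
  exact ⟨hv.2, fun hvAX ↦
    disjoint_right.1 h.disjoint_union_right hv.1 hvAX.1⟩

theorem IsSeparation.subset_corner_of_disjoint (h : IsSeparation G U A X B) {C : Set V}
    (hU : F ∪ S ⊆ U) (hC : C ⊆ F ∪ S) (hCB : Disjoint C B) (hAF : A ∩ F = ∅) :
    C ⊆ corner A X F S := by
  rw [← empty_union (corner A X F S), ← hAF, inter_union_corner]
  refine fun v hv ↦ ⟨?_, hC hv⟩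
  have := disjoint_left.1 hCB hv
  have := h.mem_or (hU (hC hv))
  tauto

theorem KConnected.le_ncard_corner_of_disjoint {C Q : Set V}
    (hG : KConnected G k) (hFS : IsSeparation G univ F S Q) (h : IsSeparation G U A X B)
    (hU : F ∪ S ⊆ U) (hB : B.Nonempty) (hCk : C.ncard = k) (hC : C ⊆ F ∪ S)
    (hCB : Disjoint C B) : k ≤ (corner A X F S).ncard := by
  rcases (A ∩ F).eq_empty_or_nonempty with hAF | hAF
  · have := hG.finite_s5
    exact hCk ▸ ncard_le_ncard (h.subset_corner_of_disjoint hU hC hCB hAF)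
  · exact hG.le_ncard_corner hFS h hU hAF hB

theorem KConnected.le_ncard_of_disjoint [Fintype V] [DecidableRel G.Adj] {C W Q : Set V} {m : ℕ}
    (hG : KConnected G k) (hH : KConnected ((addClique G S).induce (R ∪ S)) k)
    (hdeg : ∀ v ∉ C, 3 * k / 2 + m - 1 ≤ G.degree v) (hWm : W.ncard ≤ m)
    (hCk : C.ncard = k) (hSk : S.ncard = k) (hC : C ⊆ F ∪ S)
    (hFS : IsSeparation G univ F S Q) (h' : IsSeparation G Wᶜ F S R) (hR : R.Nonempty)
    (h : IsSeparation G Wᶜ A X B) (hA : A.Nonempty) (hB : B.Nonempty) (hCB : Disjoint C B) :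
    k ≤ X.ncard := by
  by_contra! hX
  have hFSW : F ∪ S ⊆ Wᶜ := h'.left_union_subset
  have corner_rest {D E : Set V} (hsep : IsSeparation G Wᶜ D X E) (hD : D.Nonempty)
      (hE : E.Nonempty) (hDR : (D ∩ R).Nonempty) : k ≤ (corner D X R S).ncard :=
    hH.le_ncard_corner_of_addClique h'.disjoint_separator_right.symm hsep
      h'.symm.left_union_subset hDR (hG.inter_union_nonempty hFS h' hsep.symm hE hD hX)
  have hAF : k ≤ (corner A X F S).ncard :=
    hG.le_ncard_corner_of_disjoint hFS h hFSW hB hCk hC hCB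
  have hBR : B ∩ R = ∅ := by
    by_contra! hBR
    have := h.ncard_le_of_opposite_corners h' (hSk ▸ hAF) (hSk ▸ corner_rest h.symm hB hA hBR)
    omega
  have hBF : k ≤ (corner B X F S).ncard ∨ k / 2 < (S ∩ B).ncard := by
    rcases (B ∩ F).eq_empty_or_nonempty with hBF | hBF
    · right
      have hBS : B ⊆ S := h'.subset_separator_of_disjoint h.symm.left_subset
        (disjoint_iff_inter_eq_empty.2 hBF) (disjoint_iff_inter_eq_empty.2 hBR)
      have := h.symm.le_ncard_add_ncard_of_le_degree
        (fun v hv ↦ hdeg v (disjoint_right.1 hCB hv)) hWm hB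
      rw [inter_eq_right.2 hBS]
      omega
    · exact .inl (hG.le_ncard_corner hFS h.symm hFSW hBF hA)
  have hAR : k ≤ (corner A X R S).ncard ∨ k / 2 ≤ (X ∩ R).ncard := by
    rcases (A ∩ R).eq_empty_or_nonempty with hAR | hAR
    · right
      have hRX : R ⊆ X := h.subset_separator_of_disjoint h'.symm.left_subset
        (disjoint_iff_inter_eq_empty.2 hAR).symm (disjoint_iff_inter_eq_empty.2 hBR).symm
      have := h'.symm.le_ncard_add_ncard_of_le_degree
        (fun v hv ↦ hdeg v fun hvC ↦ disjoint_left.1 h'.disjoint_union_right (hC hvC) hv) hWm hR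
      rw [inter_eq_right.2 hRX]
      omega
    · exact .inl (corner_rest h hA hB hAR)
  subst hSk
  exact hX.not_ge (h.ncard_le_of_corners h' hAF hBF hAR)

end Separation

/-- Let `(G, C) ∈ F_k(m)`, `S` a separating set with `|S| = k`, and `F` a
fragment of `G` to `S` with `C ⊆ G(V(F) ∪ S)`. If `W ⊆ G - (S ∪ V(F))` has
order at most `m` and `G[S] - V(F ∪ W)` is `k`-connected, then `G - V(W)` is
`k`-connected. -/
theorem stmt_5 {V : Type*} [Fintype V] [DecidableEq V] (G : SimpleGraph V)
    [DecidableRel G.Adj] (k m : ℕ) (hk : 0 < k) (hm : 0 < m)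
    (hG : KConnected G k)
    (C : Set V) (hCcard : C.ncard = k)
    (hCclique : ∀ u ∈ C, ∀ v ∈ C, u ≠ v → G.Adj u v)
    (hdeg : ∀ v ∉ C, 3 * k / 2 + m - 1 ≤ G.degree v)
    (S F : Set V) (hsep : ¬ (G.induce (Sᶜ)).Connected) (hS : S.ncard = k)
    (hF : IsFragment G S F) (hC : C ⊆ F ∪ S)
    (W : Set V) (hW : W ⊆ (S ∪ F)ᶜ) (hWcard : W.ncard ≤ m)
    (hkc : KConnected ((addClique G S).induce ((F ∪ W)ᶜ)) k) :
    KConnected (G.induce (Wᶜ)) k := by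
  have hFS := hF.isSeparation
  have hWQ : W ⊆ Sᶜ \ F := by rwa [compl_union] at hW
  have h' : IsSeparation G Wᶜ F S ((Sᶜ \ F) \ W) :=
    compl_eq_univ_sdiff W ▸ hFS.sdiff_right hWQ
  have hrest : (F ∪ W)ᶜ = (Sᶜ \ F) \ W ∪ S := by
    rw [union_comm, compl_union, ← sdiff_eq, h'.sdiff_left_eq]
  rw [hrest] at hkc
  have hR : ((Sᶜ \ F) \ W).Nonempty := nonempty_iff_ne_empty.2 fun hR ↦ by
    have := hkc.1
    rw [hR, empty_union, Nat.card_coe_set_eq] at this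
    omega
  have hcard : k + 1 ≤ (Wᶜ).ncard := by
    obtain ⟨f, hf⟩ := hF.1
    rw [← hS, Nat.succ_le_iff]
    exact ncard_lt_ncard <| h'.separator_subset.ssubset_of_mem_notMem
      (h'.left_subset hf) (hF.2.1 hf)
  refine kConnected_induce_of_forall_isSeparation hcard fun A X B h hA hB ↦ ?_
  rcases h.disjoint_or_disjoint_of_isClique hCclique with hCA | hCB
  · exact hG.le_ncard_of_disjoint hkc hdeg hWcard hCcard hS hC hFS h' hR h.symm hB hA hCA
  · exact hG.le_ncard_of_disjoint hkc hdeg hWcard hCcard hS hC hFS h' hR h hA hB hCB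
end

section
/- Let G be a connected finite simple graph with minimum degree δ(G) ≥ d, where d ≥ 1. Then for every tree T of order d, G contains a subtree T′ isomorphic to T such that G − V(T′) is connected. -/
/-!
Root `T`, and let `C` be maximal among the vertex sets that induce a connected subgraph of `G` and
miss some copy of `T`. We claim that every copy `f` of `T` missing `C` covers all of `H = G - C`, so
that the complement of the copy is `C`.

Let `A` be the set of vertices of `H` with a neighbour in `C`. By maximality every copy of `T` in
`H` covers `A`, and vertices outside `A` keep their full degree in `H`. Going from the leaves to the
root, one shows that if the subtree above `y` meets `A` in a copy `f`, then no unused vertex `w` is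
adjacent to the image of the parent of `y`. Otherwise move `y` to `w` and re-embed the subtree above
`y` greedily so as to miss `f y`, which by induction lies in `A`. The greedy choice works because
the inner vertices are placed on vertices `u` that can be freed by some other re-embedding: such a
`u` is not in `A`, so its degree is large, and its neighbours that cannot be freed come from an
antichain of the tree, hence are at most as many as the leaves still to be placed. At the root the
condition on the parent is void, so no vertex of `H` is unused.
-/

namespace NonseparatingTree

open Set

variable {V W : Type*}

section RootedOrder

variable {T : SimpleGraph W}

/-- The unique path from the root `r` to `t` in the tree `T`. -/
noncomputable def rootPath (hT : T.IsTree) (r t : W) : T.Walk r t :=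
  (hT.existsUnique_path r t).choose

lemma isPath_rootPath (hT : T.IsTree) (r t : W) : (rootPath hT r t).IsPath :=
  (hT.existsUnique_path r t).choose_spec.1

lemma eq_rootPath (hT : T.IsTree) {r t : W} {p : T.Walk r t} (hp : p.IsPath) :
    p = rootPath hT r t :=
  (hT.existsUnique_path r t).choose_spec.2 p hp

lemma takeUntil_rootPath [DecidableEq W] (hT : T.IsTree) {r a b : W}
    (hab : a ∈ (rootPath hT r b).support) :
    (rootPath hT r b).takeUntil a hab = rootPath hT r a :=
  eq_rootPath hT ((isPath_rootPath hT r b).takeUntil hab)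

lemma dropLast_rootPath (hT : T.IsTree) (r t : W) :
    (rootPath hT r t).dropLast = rootPath hT r (rootPath hT r t).penultimate :=
  eq_rootPath hT (isPath_rootPath hT r t).dropLast

/-- The tree order of `T` rooted at `r`: `a ≤ b` when `a` lies on the path from `r` to `b`. -/
noncomputable abbrev rootedPartialOrder (hT : T.IsTree) (r : W) : PartialOrder W where
  le a b := a ∈ (rootPath hT r b).support
  le_refl a := (rootPath hT r a).end_mem_support
  le_trans a b c hab hbc := by
    classical
    rw [← takeUntil_rootPath hT hbc] at hab
    exact SimpleGraph.Walk.support_takeUntil_subset_support _ hbc hab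
  le_antisymm a b hab hba := by
    classical
    by_contra hne
    have hlt_ab := SimpleGraph.Walk.length_takeUntil_lt_length hab hne
    have hlt_ba := SimpleGraph.Walk.length_takeUntil_lt_length hba (Ne.symm hne)
    rw [takeUntil_rootPath] at hlt_ab hlt_ba
    exact lt_asymm hlt_ab hlt_ba

/-- The root is the least element of the rooted tree order. -/
abbrev rootedOrderBot (hT : T.IsTree) (r : W) :
    letI := rootedPartialOrder hT r
    OrderBot W :=
  letI := rootedPartialOrder hT r
  { bot := r
    bot_le := fun t ↦ (rootPath hT r t).start_mem_support }

/-- In the rooted tree order the predecessor of a vertex is its parent, with the root as its own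
parent. -/
noncomputable abbrev rootedPredOrder (hT : T.IsTree) (r : W) :
    letI := rootedPartialOrder hT r
    PredOrder W :=
  letI := rootedPartialOrder hT r
  { pred := fun t ↦ (rootPath hT r t).penultimate
    pred_le := fun t ↦ (rootPath hT r t).getVert_mem_support _
    min_of_le_pred := fun {t} ht ↦ by
      by_cases hnil : (rootPath hT r t).Nil
      · exact hnil.eq ▸ fun a _ ↦ (rootPath hT r a).start_mem_support
      · refine absurd (le_antisymm ?_ ht) (SimpleGraph.Walk.adj_penultimate hnil).ne
        exact (rootPath hT r t).getVert_mem_support _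
    le_pred_of_lt := fun {a b} hab ↦ by
      have hmem : a ∈ (rootPath hT r b).support := hab.le
      have hnil : ¬ (rootPath hT r b).Nil := fun hnil ↦
        hab.not_ge (hnil.eq ▸ (rootPath hT r a).start_mem_support)
      rw [← SimpleGraph.Walk.support_dropLast_concat hnil, List.mem_append, List.mem_singleton,
        or_iff_left hab.ne, dropLast_rootPath] at hmem
      exact hmem }

lemma exists_rootedOrder (hT : T.IsTree) :
    ∃ (_ : PartialOrder W) (_ : OrderBot W) (_ : PredOrder W),
      ∀ a b : W, T.Adj a b → a ⋖ b ∨ b ⋖ a := by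
  obtain ⟨r⟩ := hT.1.nonempty
  let := rootedPartialOrder hT r
  let := rootedPredOrder hT r
  refine ⟨inferInstance, rootedOrderBot hT r, inferInstance, ?_⟩
  have covBy_of_le {a b : W} (hadj : T.Adj a b) (hab : a ≤ b) : a ⋖ b := by
    have hpred : a = Order.pred b :=
      hT.2.eq_penultimate_of_adj_end (isPath_rootPath hT r b) hadj.symm hab
    have hmin : ¬ IsMin b := fun h ↦ hadj.ne (h.eq_of_le hab)
    exact hpred ▸ Order.pred_covBy_of_not_isMin hmin
  intro a b hadj
  by_cases hab : a ≤ b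
  · exact .inl (covBy_of_le hadj hab)
  · exact .inr (covBy_of_le hadj.symm (hT.2.mem_support_of_ne_mem_support_of_adj_of_isPath
      (isPath_rootPath hT r a) (isPath_rootPath hT r b) hadj hab))

end RootedOrder

section Order

variable [PartialOrder W]

lemma isLowerSet_setOf_not_isMax : IsLowerSet {t : W | ¬ IsMax t} :=
  fun _ _ hba ha hb ↦ ha (hb.mono hba)

lemma ncard_compl_Ioi_union_add_ncard_isMax_le [Finite W] (y : W) :
    ((Ioi y)ᶜ ∪ {t | ¬ IsMax t}).ncard + {l | y ≤ l ∧ IsMax l}.ncard ≤ Nat.card W + 1 := by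
  have hsub : (Ioi y)ᶜ ∪ {t | ¬ IsMax t} ⊆ insert y {l | y ≤ l ∧ IsMax l}ᶜ := by
    rintro t ht
    refine or_iff_not_imp_left.2 fun hne ⟨hyt, hmax⟩ ↦ ?_
    exact ht.elim (fun h ↦ h (hyt.lt_of_ne' hne)) fun h ↦ h hmax
  have hle := (ncard_le_ncard hsub).trans (ncard_insert_le _ _)
  have hcompl := ncard_add_ncard_compl {l | y ≤ l ∧ IsMax l}
  omega

variable [PredOrder W]

lemma le_of_lt_of_covBy {s t y : W} (hyt : y < t) (hst : s ⋖ t) : y ≤ s :=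
  (Order.le_pred_of_lt hyt).trans_eq hst.pred_eq

lemma ncard_le_ncard_isMax_of_isAntichain [Finite W] {y : W} {J : Set W}
    (hJ : IsAntichain (· ≤ ·) J) (hy : J ⊆ Ici y) :
    J.ncard ≤ {l | y ≤ l ∧ IsMax l}.ncard := by
  choose leaf hle hmax using fun j : W ↦
    Finite.exists_le_maximal (p := fun _ ↦ True) (a := j) trivial
  refine ncard_le_ncard_of_injOn leaf
    (fun j hj ↦ ⟨(hy hj).trans (hle j), maximal_true.1 (hmax j)⟩) fun i hi j hj hij ↦ ?_
  rcases le_total_of_directed (hle i) (hij ▸ hle j) with hji | hij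
  · exact (hJ.eq hj hi hji).symm
  · exact hJ.eq hi hj hij

end Order

lemma exists_adj_notMem {H : SimpleGraph V} {u : V} [Fintype (H.neighborSet u)] {B : Set V}
    (hfin : B.Finite) (hu : u ∈ B) (hB : B.ncard ≤ H.degree u) : ∃ x ∉ B, H.Adj u x := by
  by_contra! hcon
  have hsub : H.neighborSet u ⊆ B \ {u} := fun x hx ↦
    ⟨by_contra fun hxB ↦ hcon x hxB hx, hx.ne'⟩
  have hle := ncard_le_ncard hsub hfin.sdiff
  have hlt := ncard_sdiff_singleton_lt_of_mem hu hfin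
  rw [← Nat.card_coe_set_eq, Nat.card_eq_fintype_card, H.card_neighborSet_eq_degree] at hle
  omega

lemma exists_adj_notMem_ne {H : SimpleGraph V} {u : V} [Fintype (H.neighborSet u)] {B : Set V}
    (hfin : B.Finite) (hu : u ∈ B) (hB : B.ncard < H.degree u) (a : V) :
    ∃ x ∉ B, x ≠ a ∧ H.Adj u x := by
  obtain ⟨x, hx, hadj⟩ := exists_adj_notMem (hfin.insert a) (mem_insert_of_mem a hu)
    ((ncard_insert_le a B).trans hB)
  rw [mem_insert_iff, not_or] at hx
  exact ⟨x, hx.2, hx.1, hadj⟩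

/-- `f` embeds the part `K` of a rooted tree, given by its tree order on `W`, into `H`: it is
injective on `K` and maps the edges (the covering pairs) inside `K` to edges of `H`. A copy of the
whole tree is the case `K = univ`; values of `f` outside `K` are irrelevant. -/
structure IsCopyOn [PartialOrder W] (H : SimpleGraph V) (K : Set W) (f : W → V) : Prop where
  injOn : InjOn f K
  adj : ∀ ⦃s⦄, s ∈ K → ∀ ⦃t⦄, t ∈ K → s ⋖ t → H.Adj (f s) (f t)

/-- `w` can take the place of `f y` in a copy `f`, as far as `y` and its ancestors are concerned:
`w` is not used by `f` and is adjacent to the image of the parent of `y`, if there is one. -/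
def CanReplace [PartialOrder W] (H : SimpleGraph V) (f : W → V) (y : W) (w : V) : Prop :=
  w ∉ range f ∧ ∀ s, s ⋖ y → H.Adj (f s) w

namespace IsCopyOn

section PartialOrder

variable [PartialOrder W] {H : SimpleGraph V} {K : Set W} {f : W → V}

lemma injective (hf : IsCopyOn H univ f) : Function.Injective f :=
  injOn_univ.1 hf.injOn

lemma adj_of_covBy (hf : IsCopyOn H univ f) {s t : W} (hst : s ⋖ t) : H.Adj (f s) (f t) :=
  hf.adj (mem_univ s) (mem_univ t) hst

lemma val_comp {S : Set V} {f : W → S} (hf : IsCopyOn (H.induce S) K f) :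
    IsCopyOn H K (Subtype.val ∘ f) where
  injOn := Subtype.val_injective.comp_injOn hf.injOn
  adj _ hs _ ht hst := hf.adj hs ht hst

lemma codRestrict (hf : IsCopyOn H K f) {S : Set V} (hS : ∀ t, f t ∈ S) :
    IsCopyOn (H.induce S) K (Set.codRestrict f S hS) where
  injOn _ hs _ ht h := hf.injOn hs ht (congrArg Subtype.val h)
  adj _ hs _ ht hst := hf.adj hs ht hst

lemma mono {K' : Set W} (hf : IsCopyOn H K f) (hK' : K' ⊆ K) : IsCopyOn H K' f where
  injOn := hf.injOn.mono hK'
  adj _ hs _ ht hst := hf.adj (hK' hs) (hK' ht) hst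

lemma update_insert [DecidableEq W] (hf : IsCopyOn H K f) (hK : IsLowerSet K) {t : W} (ht : t ∉ K)
    {x : V} (hx : x ∉ f '' K) (hadj : ∀ s ∈ K, s ⋖ t → H.Adj (f s) x) :
    IsCopyOn H (insert t K) (Function.update f t x) := by
  have hupd : EqOn (Function.update f t x) f K := fun s hs ↦
    Function.update_of_ne (ne_of_mem_of_not_mem hs ht) x f
  refine ⟨(injOn_insert ht).2 ⟨hupd.injOn_iff.2 hf.injOn, ?_⟩, ?_⟩
  · rwa [Function.update_self, hupd.image_eq]
  · rintro s (rfl | hs) s' (rfl | hs') hcov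
    · exact absurd rfl hcov.ne
    · exact absurd (hK hcov.le hs') ht
    · rw [Function.update_self, hupd hs]
      exact hadj s hs hcov
    · rw [hupd hs, hupd hs']
      exact hf.adj hs hs' hcov

lemma update_compl_Ioi [DecidableEq W] (hf : IsCopyOn H univ f) {y : W} {w : V}
    (hw : CanReplace H f y w) : IsCopyOn H (Ioi y)ᶜ (Function.update f y w) := by
  have hinsert : (Ioi y)ᶜ = insert y (Ici y)ᶜ := by
    ext t
    simp only [mem_compl_iff, mem_Ioi, mem_insert_iff, mem_Ici, lt_iff_le_and_ne]
    tauto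
  rw [hinsert]
  exact (hf.mono (subset_univ _)).update_insert (isUpperSet_Ici y).compl (by simp)
    (fun h ↦ hw.1 (image_subset_range f _ h)) fun s _ hs ↦ hw.2 s hs

end PartialOrder

variable [PartialOrder W] [OrderBot W] [PredOrder W] [Finite W] {H : SimpleGraph V}

/-- Greedy extension, each parent before its children: in `hstep`, `u` is the image of the parent
of `t` and `B` is the set of vertices used so far. -/
lemma exists_extension {K K' : Set W} {g : W → V} {X : W → Set V}
    (hg : IsCopyOn H K g) (hbot : ⊥ ∈ K) (hK : IsLowerSet K) (hK' : IsLowerSet K') (hKK' : K ⊆ K')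
    (hgX : ∀ t ∈ K, g t ∈ X t)
    (hstep : ∀ s t, s ⋖ t → t ∈ K' → t ∉ K → ∀ u ∈ X s, ∀ B : Set V, B.Finite → u ∈ B →
      MapsTo g K B → B.ncard < K'.ncard → ∃ x ∈ X t, x ∉ B ∧ H.Adj u x) :
    ∃ g', IsCopyOn H K' g' ∧ EqOn g' g K ∧ ∀ t ∈ K', g' t ∈ X t := by
  classical
  induction K' using WellFoundedLT.induction with
  | ind K' ih =>
  rcases hKK'.eq_or_ssubset with rfl | hlt
  · exact ⟨g, hg, eqOn_refl g K, hgX⟩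
  obtain ⟨t, ⟨htK', htK⟩, htmax⟩ := (toFinite (K' \ K)).exists_maximal (nonempty_of_ssubset hlt)
  have hlower : IsLowerSet (K' \ {t}) := by
    rintro b a hab ⟨hb, hbt⟩
    refine ⟨hK' hab hb, ?_⟩
    rintro rfl
    exact hbt (le_antisymm (htmax ⟨hb, fun hbK ↦ htK (hK hab hbK)⟩ hab) hab)
  have hcard := ncard_sdiff_singleton_lt_of_mem htK'
  obtain ⟨e, he, heq, heX⟩ := ih (K' \ {t}) (sdiff_singleton_ssubset.2 htK') hlower
    (subset_sdiff_singleton hKK' htK)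
    fun s a hsa ha haK u hu B hfin huB hB hlt ↦
      hstep s a hsa ha.1 haK u hu B hfin huB hB (hlt.trans hcard)
  have hparent : Order.pred t ⋖ t :=
    Order.pred_covBy_of_not_isMin fun hmin ↦ htK (hmin.eq_bot ▸ hbot)
  have hparent_mem : Order.pred t ∈ K' \ {t} := ⟨hK' hparent.le htK', hparent.ne⟩
  obtain ⟨x, hxX, hx, hadj⟩ := hstep _ t hparent htK' htK _ (heX _ hparent_mem)
    (e '' (K' \ {t})) (toFinite _) (mem_image_of_mem e hparent_mem)
    (fun a ha ↦ heq ha ▸ mem_image_of_mem e (subset_sdiff_singleton hKK' htK ha))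
    ((ncard_image_le (toFinite _)).trans_lt hcard)
  have hcopy := he.update_insert hlower (t := t) (by simp) hx
    fun s _ hs ↦ hs.pred_eq ▸ hadj
  rw [insert_sdiff_self_of_mem htK'] at hcopy
  have hupd {a : W} (ha : a ≠ t) : Function.update e t x a = e a := Function.update_of_ne ha x e
  refine ⟨_, hcopy, fun a ha ↦ ?_, fun a ha ↦ ?_⟩
  · rw [hupd (ne_of_mem_of_not_mem ha htK), heq ha]
  · rcases eq_or_ne a t with rfl | hne
    · rwa [Function.update_self]
    · rw [hupd hne]
      exact heX a ⟨ha, hne⟩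

lemma exists_reembedding {f : W → V} (hf : IsCopyOn H univ f) {c : W} {v : V}
    (hv : CanReplace H f c v) {K : Set W} (hK : IsLowerSet K) (hcK : (Ioi c)ᶜ ⊆ K)
    {X : W → Set V} (hvX : v ∈ X c)
    (hstep : ∀ s t, c ≤ s → s ⋖ t → t ∈ K → ∀ u ∈ X s, ∀ B : Set V, B.Finite → u ∈ B →
      MapsTo f (Ici c)ᶜ B → B.ncard < K.ncard → ∃ x ∈ X t, x ≠ f c ∧ x ∉ B ∧ H.Adj u x) :
    ∃ g, IsCopyOn H K g ∧ EqOn g f (Ici c)ᶜ ∧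
      (∀ t ∈ K, g t ≠ f c) ∧ ∀ t ∈ K, c ≤ t → g t ∈ X t := by
  classical
  have hupd {t : W} (ht : t ≠ c) : Function.update f c v t = f t := Function.update_of_ne ht v f
  have hsub : (Ici c)ᶜ ⊆ (Ioi c)ᶜ := compl_subset_compl.2 Ioi_subset_Ici_self
  have hupd_eqOn : EqOn (Function.update f c v) f (Ici c)ᶜ := fun t ht ↦ hupd fun h ↦ ht h.ge
  obtain ⟨g, hg, heq, hgX⟩ := (hf.update_compl_Ioi hv).exists_extension
    (X := fun t ↦ {x | x ≠ f c ∧ (c ≤ t → x ∈ X t)})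
    (by simp) (isUpperSet_Ioi c).compl hK hcK
    (fun t ht ↦ by
      rcases eq_or_ne t c with rfl | hne
      · rw [Function.update_self]
        exact ⟨fun h ↦ hv.1 ⟨t, h.symm⟩, fun _ ↦ hvX⟩
      · rw [hupd hne]
        exact ⟨hf.injective.ne hne, fun hct ↦ absurd (hct.lt_of_ne' hne) ht⟩)
    fun s t hst htK ht u hu B hfin huB hB hcard ↦ by
      have hcs := le_of_lt_of_covBy (not_notMem.1 ht) hst
      obtain ⟨x, hxX, hne, hxB, hadj⟩ := hstep s t hcs hst htK u (hu.2 hcs) B hfin huB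
        ((hB.mono_left hsub).congr hupd_eqOn) hcard
      exact ⟨x, ⟨hne, fun _ ↦ hxX⟩, hxB, hadj⟩
  exact ⟨g, hg, (heq.mono hsub).trans hupd_eqOn, fun t ht ↦ (hgX t ht).1, fun t ht ↦ (hgX t ht).2⟩

end IsCopyOn

lemma exists_canReplace [PartialOrder W] [PredOrder W] [Finite W] {H : SimpleGraph V}
    [H.LocallyFinite] {f : W → V} {s c : W} (hsc : s ⋖ c) (hdeg : Nat.card W ≤ H.degree (f s)) :
    ∃ w, CanReplace H f c w := by
  have hcard : (range f).ncard ≤ Nat.card W := by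
    rw [← image_univ, ← ncard_univ]
    exact ncard_image_le (toFinite _)
  obtain ⟨w, hw, hadj⟩ := exists_adj_notMem (finite_range f) (mem_range_self s) (hcard.trans hdeg)
  refine ⟨w, hw, fun s' hs' ↦ ?_⟩
  rwa [← hs'.pred_eq, hsc.pred_eq]

/-- The vertices that can be freed by re-embedding the subtree above `y`: those missed by some copy
of the tree that agrees with `f` outside this subtree. -/
def vacatable [PartialOrder W] (H : SimpleGraph V) (f : W → V) (y : W) : Set V :=
  {u | ∃ f', IsCopyOn H univ f' ∧ EqOn f' f (Ici y)ᶜ ∧ u ∉ range f'}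

lemma vacatable_congr [PartialOrder W] {H : SimpleGraph V} {f f' : W → V} {y : W}
    (h : EqOn f' f (Ici y)ᶜ) : vacatable H f' y = vacatable H f y := by
  ext u
  exact exists_congr fun g ↦ and_congr_right' (and_congr_left' ⟨(·.trans h), (·.trans h.symm)⟩)

/-- No copy of the tree that uses a vertex of `A` for the subtree above `c` allows the image of `c`
to be replaced. -/
def Irreplaceable [PartialOrder W] (H : SimpleGraph V) (A : Set V) (c : W) : Prop :=
  ∀ f : W → V, IsCopyOn H univ f → (∃ t, c ≤ t ∧ f t ∈ A) → ∀ w, ¬ CanReplace H f c w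

/-- Every copy of the tree `W` in `H` covers `A`, and only vertices of `A` may have degree less than
the order of the tree. -/
structure IsUnavoidable (W : Type*) [PartialOrder W] (H : SimpleGraph V) [H.LocallyFinite]
    (A : Set V) : Prop where
  subset_range : ∀ f : W → V, IsCopyOn H univ f → A ⊆ range f
  card_le_degree : ∀ v ∉ A, Nat.card W ≤ H.degree v

namespace IsUnavoidable

variable [PartialOrder W] {H : SimpleGraph V} [H.LocallyFinite] {A : Set V} {f : W → V} {y : W}

lemma notMem_of_mem_vacatable (hA : IsUnavoidable W H A) {u : V} (hu : u ∈ vacatable H f y) :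
    u ∉ A := by
  obtain ⟨f', hf', -, huf'⟩ := hu
  exact fun huA ↦ huf' (hA.subset_range f' hf' huA)

variable [PredOrder W] [Finite W]

lemma apply_mem_of_irreplaceable (hA : IsUnavoidable W H A)
    (hirr : ∀ c > y, Irreplaceable H A c) (hf : IsCopyOn H univ f)
    (hy : ∃ t, y ≤ t ∧ f t ∈ A) : f y ∈ A := by
  by_contra hfy
  obtain ⟨t, hyt, ht⟩ := hy
  have hlt : y < t := hyt.lt_of_ne fun h ↦ hfy (h ▸ ht)
  obtain ⟨c, hyc, hct⟩ := exists_covBy_le_of_lt hlt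
  obtain ⟨w, hw⟩ := exists_canReplace hyc (hA.card_le_degree _ hfy)
  exact hirr c hyc.lt f hf ⟨t, hct, ht⟩ w hw

variable [OrderBot W]

lemma apply_mem_vacatable (hA : IsUnavoidable W H A) (hf : IsCopyOn H univ f) {c : W}
    (hyc : y ≤ c) {v : V} (hv : CanReplace H f c v) (hc : ∀ t, c ≤ t → f t ∉ A) :
    f c ∈ vacatable H f y := by
  obtain ⟨g, hg, heq, hne, -⟩ := hf.exists_reembedding hv isLowerSet_univ (subset_univ _)
    (X := fun _ ↦ Aᶜ) (fun hvA ↦ hv.1 (hA.subset_range f hf hvA))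
    fun s t _ _ _ u hu B hfin huB hfB hcard ↦ by
      have hAB : A ⊆ B := fun a ha ↦ by
        obtain ⟨t, rfl⟩ := hA.subset_range f hf ha
        exact hfB fun hct ↦ hc t hct ha
      rw [ncard_univ] at hcard
      obtain ⟨x, hxB, hne, hadj⟩ := exists_adj_notMem_ne hfin huB
        (hcard.trans_le (hA.card_le_degree u hu)) (f c)
      exact ⟨x, fun hxA ↦ hxB (hAB hxA), hne, hxB, hadj⟩
  exact ⟨g, hg, heq.mono (compl_subset_compl.2 (Ici_subset_Ici.2 hyc)),
    fun ⟨t, ht⟩ ↦ hne t (mem_univ t) ht⟩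

lemma isAntichain_not_vacatable (hA : IsUnavoidable W H A)
    (hirr : ∀ c > y, Irreplaceable H A c) (hf : IsCopyOn H univ f) {u : V} (hu : u ∉ range f) :
    IsAntichain (· ≤ ·) {j | y ≤ j ∧ H.Adj u (f j) ∧ f j ∉ vacatable H f y} := by
  rintro i ⟨hyi, hadj, -⟩ j ⟨hyj, -, hj⟩ hne hle
  obtain ⟨c, hic, hcj⟩ := exists_covBy_le_of_lt (hle.lt_of_ne hne)
  have hcu : CanReplace H f c u := by
    refine ⟨hu, fun s hs ↦ ?_⟩
    rw [← hs.pred_eq, hic.pred_eq]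
    exact hadj.symm
  have hcA : ∀ t, c ≤ t → f t ∉ A := fun t hct ht ↦
    hirr c (hyi.trans_lt hic.lt) f hf ⟨t, hct, ht⟩ u hcu
  obtain ⟨w, hw⟩ : ∃ w, CanReplace H f j w := by
    rcases hcj.eq_or_lt with rfl | hlt
    · exact ⟨u, hcu⟩
    · have hparent := Order.pred_covBy_of_not_isMin hlt.not_isMin
      exact exists_canReplace hparent
        (hA.card_le_degree _ (hcA _ (Order.le_pred_of_lt hlt)))
  exact hj (hA.apply_mem_vacatable hf hyj hw fun t hjt ↦ hcA t (hcj.trans hjt))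

lemma exists_adj_mem_vacatable (hA : IsUnavoidable W H A) (hirr : ∀ c > y, Irreplaceable H A c)
    {u : V} (hu : u ∈ vacatable H f y) {B : Set V} (hfin : B.Finite) (huB : u ∈ B)
    (hfB : MapsTo f (Ici y)ᶜ B) (hcard : B.ncard + {l | y ≤ l ∧ IsMax l}.ncard ≤ Nat.card W) :
    ∃ x ∈ vacatable H f y, x ∉ B ∧ H.Adj u x := by
  have huA := hA.notMem_of_mem_vacatable hu
  obtain ⟨e, he, heq, hue⟩ := hu
  set J := {j | y ≤ j ∧ H.Adj u (e j) ∧ e j ∉ vacatable H e y}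
  have hJcard : (e '' J).ncard ≤ {l | y ≤ l ∧ IsMax l}.ncard :=
    (ncard_image_le (toFinite J)).trans <| ncard_le_ncard_isMax_of_isAntichain
      (hA.isAntichain_not_vacatable hirr he hue) fun _ hj ↦ hj.1
  have hdeg : (B ∪ e '' J).ncard ≤ H.degree u := by
    have := ncard_union_le B (e '' J)
    have := hA.card_le_degree u huA
    omega
  obtain ⟨x, hx, hadj⟩ := exists_adj_notMem (hfin.union (toFinite _)) (.inl huB) hdeg
  rw [mem_union, not_or] at hx
  refine ⟨x, by_contra fun hxv ↦ ?_, hx.1, hadj⟩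
  obtain ⟨j, rfl⟩ : x ∈ range e := by_contra fun hxe ↦ hxv ⟨e, he, heq, hxe⟩
  by_cases hyj : y ≤ j
  · exact hx.2 ⟨j, ⟨hyj, hadj, vacatable_congr heq ▸ hxv⟩, rfl⟩
  · exact hx.1 (heq hyj ▸ hfB hyj)

lemma exists_copyOn_nonleaves (hA : IsUnavoidable W H A) (hirr : ∀ c > y, Irreplaceable H A c)
    (hf : IsCopyOn H univ f) (hfy : f y ∈ A) {w : V} (hw : CanReplace H f y w) :
    ∃ g, IsCopyOn H ((Ioi y)ᶜ ∪ {t | ¬ IsMax t}) g ∧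
      ∀ t ∈ (Ioi y)ᶜ ∪ {t | ¬ IsMax t}, g t ≠ f y ∧ (y ≤ t → g t ∈ vacatable H f y) := by
  have hcardK := ncard_compl_Ioi_union_add_ncard_isMax_le y
  obtain ⟨g, hg, -, hne, hgX⟩ := hf.exists_reembedding hw
    ((isUpperSet_Ioi y).compl.union isLowerSet_setOf_not_isMax) subset_union_left
    (X := fun _ ↦ vacatable H f y) ⟨f, hf, eqOn_refl _ _, hw.1⟩
    fun s t _ _ _ u hu B hfin huB hfB hcard ↦ by
      obtain ⟨x, hxv, hxB, hadj⟩ :=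
        hA.exists_adj_mem_vacatable hirr hu hfin huB hfB (by omega)
      exact ⟨x, hxv, fun h ↦ hA.notMem_of_mem_vacatable hxv (h ▸ hfy), hxB, hadj⟩
  exact ⟨g, hg, fun t ht ↦ ⟨hne t ht, hgX t ht⟩⟩

lemma exists_copy_avoiding_apply (hA : IsUnavoidable W H A)
    (hirr : ∀ c > y, Irreplaceable H A c) (hf : IsCopyOn H univ f) (hfy : f y ∈ A) {w : V}
    (hw : CanReplace H f y w) : ∃ g : W → V, IsCopyOn H univ g ∧ f y ∉ range g := by
  obtain ⟨g, hg, hgX⟩ := hA.exists_copyOn_nonleaves hirr hf hfy hw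
  obtain ⟨g', hg', -, hgX'⟩ := hg.exists_extension (K' := univ)
    (X := fun t ↦ {x | x ≠ f y ∧ (y ≤ t → ¬ IsMax t → x ∈ vacatable H f y)})
    (.inl not_lt_bot) ((isUpperSet_Ioi y).compl.union isLowerSet_setOf_not_isMax)
    isLowerSet_univ (subset_univ _) (fun t ht ↦ ⟨(hgX t ht).1, fun hyt _ ↦ (hgX t ht).2 hyt⟩)
    fun s t hst _ ht u hu B hfin huB _ hcard ↦ by
      have hyt : y < t := not_notMem.1 fun h ↦ ht (.inl h)
      have huv := hu.2 (le_of_lt_of_covBy hyt hst) hst.lt.not_isMax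
      rw [ncard_univ] at hcard
      obtain ⟨x, hxB, hne, hadj⟩ := exists_adj_notMem_ne hfin huB
        (hcard.trans_le (hA.card_le_degree u (hA.notMem_of_mem_vacatable huv))) (f y)
      exact ⟨x, ⟨hne, fun _ hmax ↦ absurd (.inr hmax) ht⟩, hxB, hadj⟩
  exact ⟨g', hg', fun ⟨t, ht⟩ ↦ (hgX' t (mem_univ t)).1 ht⟩

lemma irreplaceable (hA : IsUnavoidable W H A) (y : W) : Irreplaceable H A y := by
  induction y using WellFoundedGT.induction with
  | ind y hirr =>
  intro f hf hy w hw
  have hfy := hA.apply_mem_of_irreplaceable hirr hf hy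
  obtain ⟨g, hg, hfyg⟩ := hA.exists_copy_avoiding_apply hirr hf hfy hw
  exact hfyg (hA.subset_range g hg hfy)

lemma surjective (hA : IsUnavoidable W H A) (hne : A.Nonempty) (hf : IsCopyOn H univ f) :
    Function.Surjective f := by
  intro w
  by_contra hw
  obtain ⟨a, ha⟩ := hne
  obtain ⟨t, rfl⟩ := hA.subset_range f hf ha
  exact hA.irreplaceable ⊥ f hf ⟨t, bot_le, ha⟩ w ⟨hw, fun s hs ↦ absurd hs.lt not_lt_bot⟩

end IsUnavoidable

lemma connected_induce_insert {G : SimpleGraph V} {C : Set V} (hC : (G.induce C).Connected)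
    {a c : V} (hc : c ∈ C) (hadj : G.Adj c a) : (G.induce (insert a C)).Connected := by
  have := SimpleGraph.induce_union_connected hC.preconnected
    (SimpleGraph.induce_pair_connected_of_adj hadj).preconnected ⟨c, hc, mem_insert c {a}⟩
  rwa [union_insert, union_singleton, insert_eq_of_mem (mem_insert_of_mem a hc)] at this

lemma exists_adj_notMem_of_connected {G : SimpleGraph V} (hG : G.Connected) {C : Set V}
    {c v : V} (hc : c ∈ C) (hv : v ∉ C) : ∃ c ∈ C, ∃ v ∉ C, G.Adj c v := by
  obtain ⟨p⟩ := hG.preconnected c v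
  obtain ⟨d, -, hfst, hsnd⟩ := p.exists_boundary_dart C hc hv
  exact ⟨_, hfst, _, hsnd, d.adj⟩

section Copies

variable [PartialOrder W] {G : SimpleGraph V} {C : Set V}

/-- `C` induces a connected subgraph of `G` that is disjoint from some copy of the tree `W`. -/
def IsConnectedOffCopy (W : Type*) [PartialOrder W] (G : SimpleGraph V) (C : Set V) : Prop :=
  (G.induce C).Connected ∧ ∃ f : W → V, IsCopyOn G univ f ∧ ∀ t, f t ∈ Cᶜ

open scoped Classical in
lemma isUnavoidable_of_maximal [Fintype V] [DecidableRel G.Adj]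
    (hdeg : ∀ v, Nat.card W ≤ G.degree v) (hC : Maximal (IsConnectedOffCopy W G) C) :
    IsUnavoidable W (G.induce Cᶜ) {v | ∃ c ∈ C, G.Adj c v} where
  subset_range f hf a ha := by
    obtain ⟨c, hc, hadj⟩ := ha
    by_contra hrange
    have hinsert : IsConnectedOffCopy W G (insert a.1 C) :=
      ⟨connected_induce_insert hC.prop.1 hc hadj, _, hf.val_comp, fun t ht ↦
        ht.elim (fun h ↦ hrange ⟨t, Subtype.ext h⟩) (f t).2⟩
    exact a.2 (hC.le_of_ge hinsert (subset_insert _ _) (mem_insert _ _))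
  card_le_degree v hv := by
    have hnbr : G.neighborSet v ⊆ Cᶜ := fun c hadj hc ↦ hv ⟨c, hc, hadj.symm⟩
    rw [SimpleGraph.degree_induce_of_neighborSet_subset hnbr]
    exact hdeg v

variable [OrderBot W] [PredOrder W] [Finite W]

lemma exists_isCopyOn_avoiding [G.LocallyFinite] (hdeg : ∀ v, Nat.card W ≤ G.degree v) {v w : V}
    (hwv : w ≠ v) : ∃ f : W → V, IsCopyOn G univ f ∧ ∀ t, f t ≠ v := by
  have hroot : IsCopyOn G {(⊥ : W)} fun _ ↦ w :=
    ⟨injOn_singleton _ _, fun s hs t ht hst ↦ absurd (hs.trans ht.symm) hst.ne⟩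
  obtain ⟨f, hf, -, hfv⟩ := hroot.exists_extension (K' := univ) (X := fun _ ↦ {v}ᶜ) rfl
    (Iic_bot (α := W) ▸ isLowerSet_Iic ⊥) isLowerSet_univ (subset_univ _) (fun _ _ ↦ hwv)
    fun s t _ _ _ u _ B hfin huB _ hcard ↦ by
      rw [ncard_univ] at hcard
      obtain ⟨x, hxB, hxv, hadj⟩ := exists_adj_notMem_ne hfin huB (hcard.trans_le (hdeg u)) v
      exact ⟨x, hxv, hxB, hadj⟩
  exact ⟨f, hf, fun t ↦ hfv t (mem_univ t)⟩

lemma range_eq_compl_of_maximal [Fintype V] [DecidableRel G.Adj] (hG : G.Connected)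
    (hdeg : ∀ v, Nat.card W ≤ G.degree v) (hC : Maximal (IsConnectedOffCopy W G) C) {f : W → V}
    (hf : IsCopyOn G univ f) (hfC : ∀ t, f t ∈ Cᶜ) : range f = Cᶜ := by
  classical
  obtain ⟨c₀, hc₀⟩ := hC.prop.1.nonempty
  obtain ⟨c, hc, a, ha, hadj⟩ := exists_adj_notMem_of_connected hG hc₀ (hfC ⊥)
  have hsurj := (isUnavoidable_of_maximal hdeg hC).surjective ⟨⟨a, ha⟩, c, hc, hadj⟩
    (hf.codRestrict hfC)
  refine (range_subset_iff.2 hfC).antisymm fun v hv ↦ ?_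
  obtain ⟨t, ht⟩ := hsurj ⟨v, hv⟩
  exact ⟨t, congrArg Subtype.val ht⟩

lemma exists_maximal_isConnectedOffCopy [Finite V] [G.LocallyFinite] [Nonempty V]
    (hdeg : ∀ v, Nat.card W ≤ G.degree v) : ∃ C, Maximal (IsConnectedOffCopy W G) C := by
  obtain ⟨v⟩ := ‹Nonempty V›
  have hpos : 0 < G.degree v := Nat.card_pos.trans_le (hdeg v)
  obtain ⟨w, hadj⟩ := (G.degree_pos_iff_exists_adj v).1 hpos
  obtain ⟨f, hf, hfv⟩ := exists_isCopyOn_avoiding hdeg hadj.ne'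
  have hv : IsConnectedOffCopy W G {v} := by
    refine ⟨?_, f, hf, hfv⟩
    rw [SimpleGraph.induce_singleton_eq_top]
    exact SimpleGraph.connected_top
  exact (toFinite {C | IsConnectedOffCopy W G C}).exists_maximal ⟨_, hv⟩

end Copies

end NonseparatingTree

/-- Let `G` be a connected graph with minimum degree `d ≥ 1`. Then for any
tree `T` of order `d`, `G` contains a subtree `T'` isomorphic to `T` such
that `G - V(T')` is connected. -/
theorem stmt_7 {V W : Type*} [Fintype V] [DecidableEq V] [Fintype W]
    (G : SimpleGraph V) [DecidableRel G.Adj] (d : ℕ) (hd : 1 ≤ d)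
    (hGconn : G.Connected) (hδ : ∀ v : V, d ≤ G.degree v)
    (T : SimpleGraph W) (hT : T.IsTree) (hTcard : Fintype.card W = d) :
    ∃ f : W → V, Function.Injective f ∧
      (∀ a b : W, T.Adj a b → G.Adj (f a) (f b)) ∧
      (G.induce ((Set.range f)ᶜ)).Connected := by
  obtain ⟨_, _, _, hcov⟩ := NonseparatingTree.exists_rootedOrder hT
  have hdeg : ∀ v, Nat.card W ≤ G.degree v := by rwa [Nat.card_eq_fintype_card, hTcard]
  have := hGconn.nonempty
  obtain ⟨C, hC⟩ := NonseparatingTree.exists_maximal_isConnectedOffCopy (W := W) hdeg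
  obtain ⟨hCconn, f, hf, hfC⟩ := hC.prop
  refine ⟨f, hf.injective, fun a b hab ↦ ?_, ?_⟩
  · exact (hcov a b hab).elim hf.adj_of_covBy fun hba ↦ (hf.adj_of_covBy hba).symm
  · rwa [NonseparatingTree.range_eq_compl_of_maximal hGconn hdeg hC hf hfC, compl_compl]
end
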